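/- arXiv:2209.12276 — 3 statements merged into one kernel-verified Lean document; each statement's English description precedes it below -/
import Mathlib

section
/- Let n ≥ 3, let (ω₁, …, ω_n) be an orthonormal basis of ℝⁿ, let δ ≥ 0, and let N be a complex n×n matrix with Nᵀ = N, trace(N) = 0, and N ω_n = 0. Suppose that for all j ≠ k in {1, …, n−1}, both |(ω_j + i ω_k)ᵀ N (ω_j + i ω_k)| ≤ δ and |(ω_j − i ω_k)ᵀ N (ω_j − i ω_k)| ≤ δ. Then every entry of N satisfies |N_{pq}| ≤ n² δ for all p, q ∈ {1, …, n}. -/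
/-!
In the basis `ω` the matrix becomes `M = W N Wᵀ`, where the rows of `W` are the `ω j`.
Expanding, `(ω_j ± iω_k)ᵀ N (ω_j ± iω_k) = M_jj - M_kk ± 2i M_jk`, so adding and subtracting the
two hypotheses bounds `M_jj - M_kk` and `2 M_jk` by `δ`. Since `M` has trace zero and
its last row and column vanish, `(n - 1) M_jj = ∑_k (M_jj - M_kk)`, summed over the first `n - 1`
indices, which gives `|M_jj| ≤ δ`. Finally `N = Wᵀ M W` with `|W_jp| ≤ 1`, a sum of `n²` terms each
of size at most `δ`.
-/

/-- Used with `c = ± i`; symmetry of `N` merges the two cross terms. -/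
lemma quad_expand {n : ℕ} (N : Matrix (Fin n) (Fin n) ℂ) (hsym : ∀ p q, N p q = N q p)
    (u v : Fin n → ℂ) (c : ℂ) (hc : c * c = -1) :
    ∑ p, ∑ q, (u p + c * v p) * N p q * (u q + c * v q) =
      (∑ p, ∑ q, u p * N p q * u q) - (∑ p, ∑ q, v p * N p q * v q)
        + 2 * c * ∑ p, ∑ q, u p * N p q * v q := by
  have h1 : ∑ p, ∑ q, v p * N p q * u q = ∑ p, ∑ q, u p * N p q * v q := by
    rw [Finset.sum_comm]
    refine Finset.sum_congr rfl fun p _ => Finset.sum_congr rfl fun q _ => ?_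
    rw [hsym q p]; ring
  have h2 : ∀ p q, (u p + c * v p) * N p q * (u q + c * v q) =
      u p * N p q * u q - v p * N p q * v q + c * (u p * N p q * v q)
        + c * (v p * N p q * u q) := by
    intro p q
    linear_combination (v p * N p q * v q) * hc
  simp only [h2, Finset.sum_add_distrib, Finset.sum_sub_distrib, ← Finset.mul_sum, h1]
  ring

lemma norm_bounds_of_add_sub {a b : ℂ} {δ : ℝ} (h1 : ‖a + 2 * Complex.I * b‖ ≤ δ)
    (h2 : ‖a + 2 * -Complex.I * b‖ ≤ δ) : ‖a‖ ≤ δ ∧ ‖b‖ ≤ δ := by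
  have e1 : 2 * a = (a + 2 * Complex.I * b) + (a + 2 * -Complex.I * b) := by ring
  have e2 : 4 * Complex.I * b = (a + 2 * Complex.I * b) - (a + 2 * -Complex.I * b) := by ring
  have n1 := norm_add_le (a + 2 * Complex.I * b) (a + 2 * -Complex.I * b)
  have n2 := norm_sub_le (a + 2 * Complex.I * b) (a + 2 * -Complex.I * b)
  rw [← e1, norm_mul] at n1
  rw [← e2, norm_mul, norm_mul] at n2
  simp only [Complex.norm_ofNat, Complex.norm_I] at n1 n2
  constructor <;> linarith [norm_nonneg b]

/-- A family of `n` numbers with zero sum, one of them zero and the others within `δ` of each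
other, is bounded by `δ`. -/
lemma diag_bound {n : ℕ} (hn : 3 ≤ n) (d : Fin n → ℂ) (l : Fin n) {δ : ℝ} (hδ : 0 ≤ δ)
    (hl : d l = 0) (hs : ∑ k, d k = 0)
    (hd : ∀ j k, j ≠ l → k ≠ l → j ≠ k → ‖d j - d k‖ ≤ δ) (j : Fin n) : ‖d j‖ ≤ δ := by
  by_cases hj : j = l
  · rw [hj, hl]; simpa using hδ
  have hcard : (Finset.univ.erase l).card = n - 1 := by
    rw [Finset.card_erase_of_mem (Finset.mem_univ l)]; simp
  have h1 : ∑ k ∈ Finset.univ.erase l, (d j - d k) = ((n - 1 : ℕ) : ℂ) * d j := by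
    have h0 : ∑ k ∈ Finset.univ.erase l, d k = 0 := by
      rw [Finset.sum_erase _ hl, hs]
    rw [Finset.sum_sub_distrib, h0, Finset.sum_const, hcard]; simp
  have h2 : ‖∑ k ∈ Finset.univ.erase l, (d j - d k)‖ ≤ (Finset.univ.erase l).card • δ := by
    refine (norm_sum_le _ _).trans (Finset.sum_le_card_nsmul _ _ _ fun k hk => ?_)
    by_cases hjk : j = k
    · subst hjk; simpa using hδ
    · exact hd j k hj (Finset.ne_of_mem_erase hk) hjk
  rw [h1, hcard, norm_mul, Complex.norm_natCast, nsmul_eq_mul] at h2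
  have hpos : (0 : ℝ) < ((n - 1 : ℕ) : ℝ) := by
    exact_mod_cast (by omega : 0 < n - 1)
  exact le_of_mul_le_mul_left h2 hpos

/-- Linear-algebra core of the stability estimate for the trace-free, divergence-free
part: if `N` is symmetric, trace-free, kills `ω_n` (the last vector of an orthonormal
basis `ω` of `ℝⁿ`), and the bilinear quantities `(ω_j ± iω_k)ᵀ N (ω_j ± iω_k)` are all
bounded by `δ` for `j ≠ k` among the first `n−1` indices, then `|N_{pq}| ≤ n²δ`. -/
theorem stmt8 (n : ℕ) (hn : 3 ≤ n) (ω : Fin n → EuclideanSpace ℝ (Fin n))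
    (hω : Orthonormal ℝ ω) (δ : ℝ) (hδ : 0 ≤ δ)
    (N : Matrix (Fin n) (Fin n) ℂ)
    (hsym : ∀ p q, N p q = N q p)
    (htr : ∑ p, N p p = 0)
    (hker : ∀ p, ∑ q, N p q * ((ω ⟨n - 1, by omega⟩) q : ℂ) = 0)
    (hbd : ∀ j k : Fin n, j ≠ k → (j : ℕ) < n - 1 → (k : ℕ) < n - 1 →
      ‖∑ p, ∑ q, ((ω j p : ℂ) + Complex.I * (ω k p : ℂ)) * N p q *
          ((ω j q : ℂ) + Complex.I * (ω k q : ℂ))‖ ≤ δ ∧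
      ‖∑ p, ∑ q, ((ω j p : ℂ) - Complex.I * (ω k p : ℂ)) * N p q *
          ((ω j q : ℂ) - Complex.I * (ω k q : ℂ))‖ ≤ δ) :
    ∀ p q, ‖N p q‖ ≤ (n : ℝ) ^ 2 * δ := by
  classical
  set l : Fin n := ⟨n - 1, by omega⟩ with hl
  have hlt : ∀ j : Fin n, j ≠ l → (j : ℕ) < n - 1 := by
    intro j hj
    have : (j : ℕ) ≠ n - 1 := fun h => hj (Fin.ext h)
    omega
  let W : Matrix (Fin n) (Fin n) ℂ := Matrix.of fun j p => (ω j p : ℂ)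
  have hW1 : W * W.transpose = 1 := by
    ext j k
    have h := orthonormal_iff_ite.mp hω j k
    rw [PiLp.inner_apply] at h
    simp only [Matrix.mul_apply, Matrix.transpose_apply, W, Matrix.of_apply, Matrix.one_apply]
    have h' : ((∑ p, ω j p * ω k p : ℝ) : ℂ) = ((if j = k then (1 : ℝ) else 0 : ℝ) : ℂ) := by
      rw [← h]
      congr 1
      refine Finset.sum_congr rfl fun p _ => ?_
      simp [mul_comm]
    push_cast at h'
    rw [h']
    split_ifs <;> simp
  have hW2 : W.transpose * W = 1 := mul_eq_one_comm.mp hW1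
  have hWle : ∀ j p, ‖W j p‖ ≤ 1 := by
    intro j p
    have h := PiLp.norm_apply_le (ω j) p
    rw [hω.1 j] at h
    simpa [W] using h
  let M : Matrix (Fin n) (Fin n) ℂ := W * N * W.transpose
  have hM : ∀ j k, M j k = ∑ p, ∑ q, (ω j p : ℂ) * N p q * (ω k q : ℂ) := by
    intro j k
    simp only [M, W, Matrix.mul_apply, Matrix.transpose_apply, Matrix.of_apply, Finset.sum_mul]
    exact Finset.sum_comm
  have hNM : N = W.transpose * M * W := by
    calc N = (W.transpose * W) * N * (W.transpose * W) := by rw [hW2]; simp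
      _ = _ := by simp only [M, Matrix.mul_assoc]
  have hMl : ∀ j, M j l = 0 := by
    intro j
    rw [hM]
    refine Finset.sum_eq_zero fun p _ => ?_
    simp only [mul_assoc]
    rw [← Finset.mul_sum, hker p, mul_zero]
  have hMsym : ∀ j k, M j k = M k j := by
    intro j k
    rw [hM, hM, Finset.sum_comm]
    refine Finset.sum_congr rfl fun p _ => Finset.sum_congr rfl fun q _ => ?_
    rw [hsym q p]; ring
  have hMtr : ∑ k, M k k = 0 := by
    have h : M.trace = N.trace := by
      simp only [M]
      rw [Matrix.trace_mul_comm, ← Matrix.mul_assoc, hW2, Matrix.one_mul]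
    have h' : N.trace = 0 := htr
    rw [h'] at h
    exact h
  have hMb : ∀ j k, j ≠ l → k ≠ l → j ≠ k → ‖M j j - M k k‖ ≤ δ ∧ ‖M j k‖ ≤ δ := by
    intro j k hj hk hjk
    obtain ⟨h1, h2⟩ := hbd j k hjk (hlt j hj) (hlt k hk)
    simp only [sub_eq_add_neg, ← neg_mul] at h2
    rw [quad_expand N hsym (fun p => (ω j p : ℂ)) (fun p => (ω k p : ℂ)) _ (by simp),
      ← hM, ← hM, ← hM] at h1 h2
    exact norm_bounds_of_add_sub h1 h2
  have hdiag := diag_bound hn (fun k => M k k) l hδ (hMl l) hMtr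
    (fun j k hj hk hjk => (hMb j k hj hk hjk).1)
  have hMle : ∀ j k, ‖M j k‖ ≤ δ := by
    intro j k
    by_cases hjk : j = k
    · subst hjk; exact hdiag j
    by_cases hk : k = l
    · rw [hk, hMl]; simpa using hδ
    by_cases hj : j = l
    · rw [hj, hMsym, hMl]; simpa using hδ
    exact (hMb j k hj hk hjk).2
  intro p q
  have hN : N p q = ∑ k, ∑ j, W j p * M j k * W k q := by
    conv_lhs => rw [hNM]
    simp only [Matrix.mul_apply, Matrix.transpose_apply, Finset.sum_mul]
  have hterm : ∀ j k, ‖W j p * M j k * W k q‖ ≤ δ := by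
    intro j k
    rw [norm_mul, norm_mul]
    calc ‖W j p‖ * ‖M j k‖ * ‖W k q‖ ≤ 1 * δ * 1 := by
          gcongr
          · exact hWle j p
          · exact hMle j k
          · exact hWle k q
      _ = δ := by ring
  rw [hN]
  calc ‖∑ k, ∑ j, W j p * M j k * W k q‖ ≤ ∑ k : Fin n, ∑ j : Fin n, δ :=
        (norm_sum_le _ _).trans (Finset.sum_le_sum fun k _ =>
          (norm_sum_le _ _).trans (Finset.sum_le_sum fun j _ => hterm j k))
    _ = (n : ℝ) ^ 2 * δ := by simp; ring
end

section
/- Let n ≥ 1, let n₀ ≥ 1 and σ ≥ 0 be real numbers, let δ, M ≥ 0, R ≥ 1, and let g : ℝⁿ → ℂ be measurable with |g(ξ)| ≤ ⟨ξ⟩^{n₀} δ for almost every ξ and ∫_{ℝⁿ} ⟨ξ⟩^{2σ} |g(ξ)|² dξ ≤ M². Then ∫_{ℝⁿ} ⟨ξ⟩^{−2} |g(ξ)|² dξ ≤ c_n · R^{2n₀ + n − 2} · δ² + R^{−2} · M², where c_n is the Lebesgue measure of the unit ball of ℝⁿ. -/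
open MeasureTheory

/-!
Split the frequencies according to whether `⟨ξ⟩ ≤ R`. The low frequencies lie in the ball of
radius `R`, of volume `c_n R^n`, and there `⟨ξ⟩⁻²|g|² ≤ ⟨ξ⟩^{2n₀-2} δ² ≤ R^{2n₀-2} δ²` because
`n₀ ≥ 1` (`low_freq_bound`). On the high frequencies `⟨ξ⟩⁻² ≤ R⁻² ≤ R⁻² ⟨ξ⟩^{2σ}`
(`high_freq_bound`). Hence the integrand is a.e. at most the sum of a constant supported on the
ball and `R⁻²` times the integrand of the a priori bound.
-/

/-- Here `a` plays the role of `⟨ξ⟩²` and `x` that of `|g(ξ)|`. -/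
lemma low_freq_bound {a x δ R n₀ : ℝ} (ha : 1 ≤ a) (hx : 0 ≤ x) (hR : 1 ≤ R) (hn₀ : 1 ≤ n₀)
    (haR : a ≤ R ^ 2) (h : x ≤ Real.sqrt a ^ n₀ * δ) :
    a⁻¹ * x ^ 2 ≤ R ^ (2 * n₀ - 2) * δ ^ 2 := by
  have ha0 : 0 < a := by linarith
  have hR0 : 0 < R := by linarith
  have hsq : (Real.sqrt a ^ n₀) ^ 2 = a ^ n₀ := by
    rw [← Real.rpow_natCast, ← Real.rpow_mul (Real.sqrt_nonneg a), mul_comm,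
      Real.rpow_mul (Real.sqrt_nonneg a), Real.rpow_natCast, Real.sq_sqrt ha0.le]
  have hx2 : x ^ 2 ≤ a ^ n₀ * δ ^ 2 := by
    calc x ^ 2 ≤ (Real.sqrt a ^ n₀ * δ) ^ 2 := by gcongr
      _ = a ^ n₀ * δ ^ 2 := by rw [mul_pow, hsq]
  calc a⁻¹ * x ^ 2 ≤ a⁻¹ * (a ^ n₀ * δ ^ 2) := by gcongr
    _ = a ^ (n₀ - 1) * δ ^ 2 := by
        rw [Real.rpow_sub_one ha0.ne']
        ring
    _ ≤ (R ^ 2) ^ (n₀ - 1) * δ ^ 2 := by gcongr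
    _ = R ^ (2 * n₀ - 2) * δ ^ 2 := by
        rw [← Real.rpow_natCast R 2, ← Real.rpow_mul hR0.le]
        congr 2
        push_cast
        ring

lemma high_freq_bound {a x R σ : ℝ} (ha : 1 ≤ a) (hR : 1 ≤ R) (hσ : 0 ≤ σ)
    (haR : R ^ 2 ≤ a) : a⁻¹ * x ^ 2 ≤ R ^ (-2 : ℝ) * (a ^ σ * x ^ 2) := by
  have hR0 : 0 < R := by linarith
  have h1 : a⁻¹ ≤ R ^ (-2 : ℝ) := by
    rw [Real.rpow_neg hR0.le, Real.rpow_two]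
    gcongr
  have h2 : 1 ≤ a ^ σ := Real.one_le_rpow ha hσ
  calc a⁻¹ * x ^ 2 ≤ R ^ (-2 : ℝ) * (1 * x ^ 2) := by
        rw [one_mul]
        gcongr
    _ ≤ R ^ (-2 : ℝ) * (a ^ σ * x ^ 2) := by gcongr

/-- High/low frequency splitting: if `|g(ξ)| ≤ ⟨ξ⟩^{n₀} δ` a.e. and
`∫ ⟨ξ⟩^{2σ}|g|² ≤ M²`, then for any `R ≥ 1`,
`∫ ⟨ξ⟩^{−2}|g|² ≤ c_n R^{2n₀+n−2} δ² + R^{−2} M²`,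
where `c_n` is the volume of the unit ball of `ℝⁿ`. -/
theorem stmt13 (n : ℕ) (hn : 1 ≤ n) (n₀ σ : ℝ) (hn₀ : 1 ≤ n₀) (hσ : 0 ≤ σ)
    (δ M R : ℝ) (hδ : 0 ≤ δ) (hM : 0 ≤ M) (hR : 1 ≤ R)
    (g : EuclideanSpace ℝ (Fin n) → ℂ) (hg : Measurable g)
    (hptw : ∀ᵐ ξ : EuclideanSpace ℝ (Fin n),
      ‖g ξ‖ ≤ Real.sqrt (1 + ‖ξ‖ ^ 2) ^ n₀ * δ)
    (hL2 : ∫⁻ ξ : EuclideanSpace ℝ (Fin n),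
        ENNReal.ofReal ((1 + ‖ξ‖ ^ 2) ^ σ * ‖g ξ‖ ^ 2) ≤ ENNReal.ofReal (M ^ 2)) :
    ∫⁻ ξ : EuclideanSpace ℝ (Fin n),
        ENNReal.ofReal ((1 + ‖ξ‖ ^ 2)⁻¹ * ‖g ξ‖ ^ 2) ≤
      ENNReal.ofReal
        ((volume (Metric.ball (0 : EuclideanSpace ℝ (Fin n)) 1)).toReal
            * R ^ (2 * n₀ + (n : ℝ) - 2) * δ ^ 2
          + R ^ (-2 : ℝ) * M ^ 2) := by
  have hR0 : 0 < R := by linarith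
  set B := Metric.ball (0 : EuclideanSpace ℝ (Fin n)) R with hB
  set C : ENNReal := ENNReal.ofReal (R ^ (2 * n₀ - 2) * δ ^ 2) with hC
  have hpt : ∀ᵐ ξ : EuclideanSpace ℝ (Fin n),
      ENNReal.ofReal ((1 + ‖ξ‖ ^ 2)⁻¹ * ‖g ξ‖ ^ 2) ≤ B.indicator (fun _ => C) ξ
        + ENNReal.ofReal (R ^ (-2 : ℝ))
          * ENNReal.ofReal ((1 + ‖ξ‖ ^ 2) ^ σ * ‖g ξ‖ ^ 2) := by
    filter_upwards [hptw] with ξ hξ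
    have ha : 1 ≤ 1 + ‖ξ‖ ^ 2 := by nlinarith [sq_nonneg ‖ξ‖]
    rcases le_total (1 + ‖ξ‖ ^ 2) (R ^ 2) with h | h
    · have hmem : ξ ∈ B := by
        rw [hB, mem_ball_zero_iff]
        exact lt_of_pow_lt_pow_left₀ 2 hR0.le (by linarith)
      rw [Set.indicator_of_mem hmem]
      exact le_add_right (ENNReal.ofReal_le_ofReal
        (low_freq_bound ha (norm_nonneg _) hR hn₀ h hξ))
    · rw [← ENNReal.ofReal_mul (by positivity)]
      exact le_add_left (ENNReal.ofReal_le_ofReal (high_freq_bound ha hR hσ h))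
  have hvol : volume B = ENNReal.ofReal (R ^ n *
      (volume (Metric.ball (0 : EuclideanSpace ℝ (Fin n)) 1)).toReal) := by
    rw [hB, Measure.addHaar_ball_of_pos volume _ hR0, finrank_euclideanSpace_fin,
      ENNReal.ofReal_mul (by positivity), ENNReal.ofReal_toReal measure_ball_lt_top.ne]
  have hpow : R ^ (2 * n₀ + (n : ℝ) - 2) = R ^ (2 * n₀ - 2) * R ^ n := by
    rw [← Real.rpow_natCast R n, ← Real.rpow_add hR0]
    congr 1
    ring
  calc _ ≤ ∫⁻ ξ : EuclideanSpace ℝ (Fin n), (B.indicator (fun _ => C) ξ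
        + ENNReal.ofReal (R ^ (-2 : ℝ))
          * ENNReal.ofReal ((1 + ‖ξ‖ ^ 2) ^ σ * ‖g ξ‖ ^ 2)) := lintegral_mono_ae hpt
    _ = C * volume B + ENNReal.ofReal (R ^ (-2 : ℝ)) * ∫⁻ ξ : EuclideanSpace ℝ (Fin n),
          ENNReal.ofReal ((1 + ‖ξ‖ ^ 2) ^ σ * ‖g ξ‖ ^ 2) := by
        rw [lintegral_add_left (measurable_const.indicator measurableSet_ball),
          lintegral_indicator_const measurableSet_ball,
          lintegral_const_mul' _ _ ENNReal.ofReal_ne_top]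
    _ ≤ C * volume B + ENNReal.ofReal (R ^ (-2 : ℝ)) * ENNReal.ofReal (M ^ 2) := by gcongr
    _ = _ := by
        rw [hvol, hC, ← ENNReal.ofReal_mul (by positivity), ← ENNReal.ofReal_mul (by positivity),
          ← ENNReal.ofReal_add (by positivity) (by positivity), hpow]
        congr 1
        ring
end

section
/- Let n ≥ 1 and let k ≥ 0 and n₀ ≥ 1 be integers, let σ > n/2 + k, M > 0, C₀ > 0, μ₀ ∈ (0, 1], κ₀ ∈ (0, 1], h₀ ∈ (0, 1), and Λ > 0. Let g : ℝⁿ → ℂ be measurable with ∫_{ℝⁿ} ⟨ξ⟩^{2σ} |g(ξ)|² dξ ≤ M², and suppose that for every h ∈ (0, h₀) and every ξ ∈ ℝⁿ: |g(ξ)| ≤ ⟨ξ⟩^{n₀} · (e^{C₀/h} Λ^{μ₀} + h^{κ₀}). Then there exist constants C > 0 and μ, κ ∈ (0, 1), depending only on n, k, n₀, σ, M, C₀, μ₀, κ₀, such that for every h ∈ (0, h₀): ∫_{ℝⁿ} ⟨ξ⟩^{k} |g(ξ)| dξ ≤ C · (e^{C/h} Λ^{μ} + h^{κ}). -/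
open MeasureTheory

/-!
The estimate is an interpolation between the pointwise bound and the weighted `L²` bound.
Write `w = ⟨ξ⟩²` and `A = e^{C₀/h}Λ^{μ₀} + h^{κ₀}`. For `θ ∈ (0, 1)`, split
`|g| = |g|^θ |g|^{1-θ}` and bound the first factor by `(⟨ξ⟩^{n₀} A)^θ`; Young's inequality with
weights `(1-θ)/2` and `(1+θ)/2` then gives
`⟨ξ⟩^k |g| ≤ A^θ (⟨ξ⟩^{2σ}|g|² + ⟨ξ⟩^{-r})`, `r = 2(σ(1-θ) - k - n₀θ)/(1+θ)`
(`weighted_interpolation`). Since `2(σ - k) > n`, one has `r > n` for small `θ`, so `⟨ξ⟩^{-r}` is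
integrable and the integral is at most `A^θ (M² + ∫ ⟨ξ⟩^{-r})`. Finally
`A^θ ≤ e^{θC₀/h} Λ^{θμ₀} + h^{θκ₀}` by subadditivity of `t ↦ t^θ`.
-/

/-- Pointwise interpolation: here `w` stands for `⟨ξ⟩²` and `x` for `|g(ξ)|`. -/
theorem weighted_interpolation (k n₀ : ℕ) (σ θ w x A : ℝ) (hθ0 : 0 < θ) (hθ1 : θ < 1)
    (hw : 0 < w) (hx : 0 ≤ x) (hA : 0 < A) (hxA : x ≤ Real.sqrt w ^ n₀ * A) :
    Real.sqrt w ^ k * x ≤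
      A ^ θ * (w ^ σ * x ^ 2 + w ^ (-(2 * (σ * (1 - θ) - k - n₀ * θ) / (1 + θ)) / 2)) := by
  rcases hx.eq_or_lt with rfl | hx
  · simp only [mul_zero]
    positivity
  set r := 2 * (σ * (1 - θ) - k - n₀ * θ) / (1 + θ) with hr
  have hpow (m : ℕ) : Real.sqrt w ^ m = w ^ ((m : ℝ) / 2) := by
    rw [Real.sqrt_eq_rpow, ← Real.rpow_natCast, ← Real.rpow_mul hw.le]
    congr 1
    ring
  rw [hpow] at hxA ⊢
  have hxθ : x ^ θ ≤ w ^ ((n₀ : ℝ) / 2 * θ) * A ^ θ := by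
    have := Real.rpow_le_rpow hx.le hxA hθ0.le
    rwa [Real.mul_rpow (by positivity) hA.le, ← Real.rpow_mul hw.le] at this
  have hP : 0 < w ^ σ * x ^ 2 := by positivity
  have hQ : 0 < w ^ (-r / 2) := by positivity
  have young := Real.geom_mean_le_arith_mean2_weighted (w₁ := (1 - θ) / 2) (w₂ := (1 + θ) / 2)
    (by linarith) (by linarith) hP.le hQ.le (by ring)
  have hsplit : (w ^ σ * x ^ 2) ^ ((1 - θ) / 2) * (w ^ (-r / 2)) ^ ((1 + θ) / 2) =
      w ^ ((k : ℝ) / 2 + (n₀ : ℝ) / 2 * θ) * x ^ (1 - θ) := by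
    rw [Real.mul_rpow (by positivity) (by positivity), ← Real.rpow_mul hw.le,
      ← Real.rpow_mul hw.le, ← Real.rpow_natCast x 2, ← Real.rpow_mul hx.le, mul_right_comm,
      ← Real.rpow_add hw]
    have h1 : σ * ((1 - θ) / 2) + -r / 2 * ((1 + θ) / 2) =
        (k : ℝ) / 2 + (n₀ : ℝ) / 2 * θ := by
      rw [hr]
      have : 1 + θ ≠ 0 := by positivity
      field_simp
      ring
    have h2 : ((2 : ℕ) : ℝ) * ((1 - θ) / 2) = 1 - θ := by
      push_cast
      ring
    rw [h1, h2]
  calc w ^ ((k : ℝ) / 2) * x = w ^ ((k : ℝ) / 2) * (x ^ θ * x ^ (1 - θ)) := by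
        rw [← Real.rpow_add hx]
        simp
    _ ≤ w ^ ((k : ℝ) / 2) * ((w ^ ((n₀ : ℝ) / 2 * θ) * A ^ θ) * x ^ (1 - θ)) := by gcongr
    _ = A ^ θ * (w ^ ((k : ℝ) / 2 + (n₀ : ℝ) / 2 * θ) * x ^ (1 - θ)) := by
        rw [Real.rpow_add hw]
        ring
    _ ≤ A ^ θ * (w ^ σ * x ^ 2 + w ^ (-r / 2)) := by
        gcongr
        rw [← hsplit]
        nlinarith

/-- Fourier-side conditional stability lemma: if `∫ ⟨ξ⟩^{2σ}|g|² ≤ M²` with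
`σ > n/2 + k` and `|g(ξ)| ≤ ⟨ξ⟩^{n₀}(e^{C₀/h}Λ^{μ₀} + h^{κ₀})` for all small `h`, then
`∫ ⟨ξ⟩^{k}|g| ≤ C(e^{C/h}Λ^{μ} + h^{κ})` for all small `h`, with constants depending
only on `n, k, n₀, σ, M, C₀, μ₀, κ₀`. -/
theorem stmt15 (n k n₀ : ℕ) (hn : 1 ≤ n) (hn₀ : 1 ≤ n₀) (σ : ℝ)
    (hσ : (n : ℝ) / 2 + k < σ) (M C₀ : ℝ) (hM : 0 < M) (hC₀ : 0 < C₀)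
    (μ₀ κ₀ : ℝ) (hμ₀ : μ₀ ∈ Set.Ioc (0 : ℝ) 1) (hκ₀ : κ₀ ∈ Set.Ioc (0 : ℝ) 1) :
    ∃ C > 0, ∃ μ ∈ Set.Ioo (0 : ℝ) 1, ∃ κ ∈ Set.Ioo (0 : ℝ) 1,
      ∀ h₀ ∈ Set.Ioo (0 : ℝ) 1, ∀ Λ > (0 : ℝ),
        ∀ g : EuclideanSpace ℝ (Fin n) → ℂ, Measurable g →
        (∫⁻ ξ : EuclideanSpace ℝ (Fin n),
            ENNReal.ofReal ((1 + ‖ξ‖ ^ 2) ^ σ * ‖g ξ‖ ^ 2) ≤ ENNReal.ofReal (M ^ 2)) →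
        (∀ h ∈ Set.Ioo (0 : ℝ) h₀, ∀ ξ : EuclideanSpace ℝ (Fin n),
            ‖g ξ‖ ≤ Real.sqrt (1 + ‖ξ‖ ^ 2) ^ n₀ *
              (Real.exp (C₀ / h) * Λ ^ μ₀ + h ^ κ₀)) →
        ∀ h ∈ Set.Ioo (0 : ℝ) h₀,
          ∫⁻ ξ : EuclideanSpace ℝ (Fin n),
              ENNReal.ofReal (Real.sqrt (1 + ‖ξ‖ ^ 2) ^ k * ‖g ξ‖) ≤
            ENNReal.ofReal (C * (Real.exp (C / h) * Λ ^ μ + h ^ κ)) := by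
  obtain ⟨hμ0, hμ1⟩ := hμ₀
  obtain ⟨hκ0, hκ1⟩ := hκ₀
  have hn' : (1 : ℝ) ≤ n := by exact_mod_cast hn
  have hk' : (0 : ℝ) ≤ k := by positivity
  have hn₀' : (1 : ℝ) ≤ n₀ := by exact_mod_cast hn₀
  -- `θ` is half the threshold below which the exponent `r` exceeds the dimension `n`.
  have hD : 0 < 2 * σ + 2 * n₀ + n := by linarith
  obtain ⟨θ, hθ⟩ : ∃ θ, θ = (2 * σ - 2 * k - n) / (2 * (2 * σ + 2 * n₀ + n)) := ⟨_, rfl⟩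
  have hθ0 : 0 < θ := by
    rw [hθ]
    apply div_pos <;> linarith
  have hθ1 : θ < 1 := by
    rw [hθ, div_lt_one (by linarith)]
    linarith
  have hθD : 2 * (θ * (2 * σ + 2 * n₀ + n)) = 2 * σ - 2 * k - n := by
    rw [eq_div_iff (by positivity)] at hθ
    linarith
  obtain ⟨r, hr⟩ : ∃ r, r = 2 * (σ * (1 - θ) - k - n₀ * θ) / (1 + θ) := ⟨_, rfl⟩
  have hrn : (n : ℝ) < r := by
    rw [hr, lt_div_iff₀ (by linarith)]
    nlinarith
  have hInt : Integrable (fun ξ : EuclideanSpace ℝ (Fin n) ↦ (1 + ‖ξ‖ ^ 2) ^ (-r / 2)) :=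
    integrable_rpow_neg_one_add_norm_sq (by simpa using hrn)
  obtain ⟨K, hK⟩ : ∃ K, K = ∫ ξ : EuclideanSpace ℝ (Fin n), (1 + ‖ξ‖ ^ 2) ^ (-r / 2) := ⟨_, rfl⟩
  have hK0 : 0 ≤ K := by
    rw [hK]
    exact integral_nonneg fun ξ ↦ by positivity
  have hKl : ∫⁻ ξ : EuclideanSpace ℝ (Fin n), ENNReal.ofReal ((1 + ‖ξ‖ ^ 2) ^ (-r / 2)) =
      ENNReal.ofReal K := by
    rw [hK, ofReal_integral_eq_lintegral_ofReal hInt]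
    exact Filter.Eventually.of_forall fun ξ ↦ by positivity
  refine ⟨M ^ 2 + K + C₀, by positivity, μ₀ * θ, ⟨by positivity, by nlinarith⟩,
    κ₀ * θ, ⟨by positivity, by nlinarith⟩, ?_⟩
  intro h₀ _ Λ hΛ g hg hL2 hpt h hh
  have hh0 : 0 < h := hh.1
  obtain ⟨A, hA⟩ : ∃ A, A = Real.exp (C₀ / h) * Λ ^ μ₀ + h ^ κ₀ := ⟨_, rfl⟩
  have hA0 : 0 < A := by
    rw [hA]
    positivity
  have hAθ : A ^ θ ≤ Real.exp ((M ^ 2 + K + C₀) / h) * Λ ^ (μ₀ * θ) + h ^ (κ₀ * θ) := by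
    calc A ^ θ ≤ (Real.exp (C₀ / h) * Λ ^ μ₀) ^ θ + (h ^ κ₀) ^ θ := by
          rw [hA]
          exact Real.rpow_add_le_add_rpow (by positivity) (by positivity) hθ0.le hθ1.le
      _ = Real.exp (C₀ / h * θ) * Λ ^ (μ₀ * θ) + h ^ (κ₀ * θ) := by
          rw [Real.mul_rpow (by positivity) (by positivity), ← Real.exp_mul,
            ← Real.rpow_mul hΛ.le, ← Real.rpow_mul hh0.le]
      _ ≤ _ := by
          have : C₀ / h * θ ≤ (M ^ 2 + K + C₀) / h :=
            calc C₀ / h * θ ≤ C₀ / h := mul_le_of_le_one_right (by positivity) hθ1.le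
              _ ≤ _ := by
                gcongr
                nlinarith [sq_nonneg M]
          gcongr
  calc ∫⁻ ξ : EuclideanSpace ℝ (Fin n), ENNReal.ofReal (Real.sqrt (1 + ‖ξ‖ ^ 2) ^ k * ‖g ξ‖)
      ≤ ∫⁻ ξ : EuclideanSpace ℝ (Fin n), ENNReal.ofReal (A ^ θ) *
          (ENNReal.ofReal ((1 + ‖ξ‖ ^ 2) ^ σ * ‖g ξ‖ ^ 2) +
            ENNReal.ofReal ((1 + ‖ξ‖ ^ 2) ^ (-r / 2))) := by
        refine lintegral_mono fun ξ ↦ ?_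
        rw [← ENNReal.ofReal_add (by positivity) (by positivity),
          ← ENNReal.ofReal_mul (by positivity)]
        apply ENNReal.ofReal_le_ofReal
        have hxi := hpt h hh ξ
        rw [← hA] at hxi
        rw [hr]
        exact weighted_interpolation k n₀ σ θ _ _ A hθ0 hθ1 (by positivity) (norm_nonneg _)
          hA0 hxi
    _ = ENNReal.ofReal (A ^ θ) *
          ((∫⁻ ξ : EuclideanSpace ℝ (Fin n), ENNReal.ofReal ((1 + ‖ξ‖ ^ 2) ^ σ * ‖g ξ‖ ^ 2)) +
            ENNReal.ofReal K) := by
        rw [lintegral_const_mul' _ _ ENNReal.ofReal_ne_top,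
          lintegral_add_right' _ hInt.aemeasurable.ennreal_ofReal, hKl]
    _ ≤ ENNReal.ofReal (A ^ θ) * (ENNReal.ofReal (M ^ 2) + ENNReal.ofReal K) := by gcongr
    _ = ENNReal.ofReal (A ^ θ * (M ^ 2 + K)) := by
        rw [← ENNReal.ofReal_add (by positivity) hK0, ← ENNReal.ofReal_mul (by positivity)]
    _ ≤ _ := by
        apply ENNReal.ofReal_le_ofReal
        rw [mul_comm]
        exact mul_le_mul (by linarith) hAθ (by positivity) (by positivity)
end
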